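/- Let d ≥ 2 and r > 0. There exists a constant C = C(d,r) > 0 such that for every w = (v, U) in the interior of K_r^co there exists w̄ = (v̄, Ū) ∈ ℝ^d × S₀^{d×d} with the following properties: (i) w̄ = λ·((a, a⊗a) − (b, b⊗b)) for some λ > 0 and some a, b ∈ ℝ^d with |a|² = |b|² = r and b ≠ ±a; (ii) the closed segment σ = [w − w̄, w + w̄] is contained in the interior of K_r^co; (iii) |v̄| ≥ C(r − |v|²); (iv) dist(σ, ∂K_r^co) ≥ (1/2)·dist(w, ∂K_r^co). -/

import Mathlib

open MeasureTheory

noncomputable section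

/-- Vectors in ℝ^d. -/
abbrev Vec (d : ℕ) := Fin d → ℝ

/-- Matrices (as functions). -/
abbrev Mat (d : ℕ) := Fin d → Fin d → ℝ

/-- The space S₀^{d×d} of symmetric trace-free d×d matrices, as a submodule. -/
def S0 (d : ℕ) : Submodule ℝ (Mat d) where
  carrier := {U | (∀ i j, U i j = U j i) ∧ ∑ i, U i i = 0}
  add_mem' := by
    rintro U V ⟨hU1, hU2⟩ ⟨hV1, hV2⟩
    refine ⟨fun i j => by simp [hU1 i j, hV1 i j], ?_⟩
    simp [Finset.sum_add_distrib, hU2, hV2]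
  zero_mem' := ⟨fun i j => rfl, by simp⟩
  smul_mem' := by
    rintro c U ⟨hU1, hU2⟩
    refine ⟨fun i j => by simp [hU1 i j], ?_⟩
    simp [← Finset.mul_sum, hU2]

/-- Partial derivative ∂ᵢ of a scalar function. -/
def pd {d : ℕ} (i : Fin d) (f : Vec d → ℝ) (x : Vec d) : ℝ :=
  fderiv ℝ f x (Pi.single i 1)

/-- The wave cone Λ: states `(v̄, Ū)` with `v̄ ≠ 0` for which there are `q̄ ∈ ℝ` and
`ξ ≠ 0` with `Ū ξ + q̄ ξ = 0` and `v̄ · ξ = 0`. -/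
def Lam (d : ℕ) : Set (Vec d × S0 d) :=
  {w | w.1 ≠ 0 ∧ ∃ (q : ℝ) (ξ : Vec d), ξ ≠ 0 ∧
    (∀ i, (∑ j, (w.2 : Mat d) i j * ξ j) + q * ξ i = 0) ∧ (∑ i, w.1 i * ξ i = 0)}

/-- The constraint set `K_r = {(v, U) : U = v ⊗ v − (r/d)·I_d}` inside ℝ^d × S₀^{d×d}.
(Note that trace-freeness of `U` forces `|v|² = r` on `K_r`.) -/
def Kset (d : ℕ) (r : ℝ) : Set (Vec d × S0 d) :=
  {w | ∀ i j, (w.2 : Mat d) i j = w.1 i * w.1 j - (r / d) * (if i = j then 1 else 0)}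

/-!
Write `w` as a convex combination of at most `dim + 1` points of `K_r`, with weights `lᵢ` and
velocities `zᵢ`, and let `k` be the index of the largest weight. Since `v - z_k = ∑ lᵢ (zᵢ - z_k)`,
some `j` satisfies `|v - z_k| ≤ (dim + 1) l_j |z_j - z_k|`, and `|v - z_k| ≥ √r - |v|` because
`|z_k| = √r`. Moving mass `l_j` between the `j`-th and the `k`-th point stays inside the hull in
both directions, as `l_j ≤ l_k`. The distance to the boundary is concave on the hull, so a quarter
of that displacement costs at most a quarter of it, and the slack that is left allows one to perturb
`z_j` on the sphere until it avoids `±z_k`.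
-/

open Metric Set Filter Topology

section InfDist

lemma mem_interior_of_infDist_compl_pos {X : Type*} [PseudoMetricSpace X] {s : Set X} {x : X}
    (hx : 0 < infDist x sᶜ) : x ∈ interior s := by
  rw [← notMem_compl_iff, ← closure_compl]
  exact fun h ↦ hx.ne' (infDist_zero_of_mem_closure h)

variable {E : Type*} [NormedAddCommGroup E] [NormedSpace ℝ E]

lemma infDist_frontier_eq_infDist_compl [FiniteDimensional ℝ E] {s : Set E} {x : E} (hx : x ∈ s) :
    infDist x (frontier s) = infDist x sᶜ := by
  rcases eq_or_ne s univ with rfl | hs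
  · simp
  obtain ⟨y, hy, hxy⟩ := exists_mem_frontier_infDist_compl_eq_dist hx hs
  have hsub : frontier s ⊆ closure sᶜ := frontier_compl s ▸ frontier_subset_closure
  refine le_antisymm (hxy ▸ infDist_le_dist_of_mem hy) ?_
  rw [← infDist_closure]
  exact infDist_le_infDist_of_subset hsub ⟨y, hy⟩

lemma add_infDist_compl_div_smul_mem {s : Set E} {x δ : E} {T : ℝ} (hx : x ∈ s) (hδ : ‖δ‖ < T) :
    x + (infDist x sᶜ / T) • δ ∈ s := by
  have hT : 0 < T := (norm_nonneg δ).trans_lt hδ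
  rcases (infDist_nonneg (x := x) (s := sᶜ)).eq_or_lt with h | h
  · simpa [← h] using hx
  apply ball_infDist_compl_subset (x := x)
  rw [mem_ball_iff_norm, add_sub_cancel_left, norm_smul, Real.norm_of_nonneg (by positivity),
    div_mul_eq_mul_div, div_lt_iff₀ hT]
  gcongr

theorem concaveOn_infDist_compl {s : Set E} (hs : Convex ℝ s) :
    ConcaveOn ℝ s fun x ↦ infDist x sᶜ := by
  refine ⟨hs, fun x hx y hy p q hp hq hpq ↦ ?_⟩
  rcases sᶜ.eq_empty_or_nonempty with h | h
  · simp [h]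
  refine (le_infDist h).2 fun z hz ↦ ?_
  set T := p • infDist x sᶜ + q • infDist y sᶜ
  by_contra! hlt
  set δ := z - (p • x + q • y) with hδ
  have hδT : ‖δ‖ < T := by rwa [dist_comm, dist_eq_norm] at hlt
  have hT0 : T ≠ 0 := ((norm_nonneg δ).trans_lt hδT).ne'
  have hmem := hs (add_infDist_compl_div_smul_mem hx hδT) (add_infDist_compl_div_smul_mem hy hδT)
    hp hq hpq
  -- `δ` is shared out between `x` and `y` in proportion to their distances to `sᶜ`
  have hsplit : p * (infDist x sᶜ / T) + q * (infDist y sᶜ / T) = 1 := by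
    rw [mul_div_assoc', mul_div_assoc', ← add_div]
    exact div_self hT0
  refine hz ?_
  convert hmem using 1
  calc z = p • x + q • y + (1 : ℝ) • δ := by rw [hδ]; module
    _ = _ := by rw [← hsplit]; module

end InfDist

section RealModule

variable {E : Type*} [AddCommGroup E] [Module ℝ E]

lemma add_smul_mem_of_abs_le_one {s : Set E} (hs : Convex ℝ s) {w D : E}
    (hadd : w + D ∈ s) (hsub : w - D ∈ s) {θ : ℝ} (hθ : |θ| ≤ 1) : w + θ • D ∈ s := by
  obtain ⟨hθ₁, hθ₂⟩ := abs_le.1 hθ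
  convert hs hadd hsub (a := (1 + θ) / 2) (b := (1 - θ) / 2) (by linarith) (by linarith) (by ring)
    using 1
  module

lemma exists_abs_le_one_of_mem_segment_sub_add {w D u : E} (hu : u ∈ segment ℝ (w - D) (w + D)) :
    ∃ θ : ℝ, |θ| ≤ 1 ∧ u = w + θ • D := by
  obtain ⟨p, q, hp, hq, hpq, rfl⟩ := hu
  refine ⟨q - p, abs_le.2 ⟨by linarith, by linarith⟩, ?_⟩
  obtain rfl : q = 1 - p := by linarith
  module

lemma sum_smul_add_smul_sub_mem {ι : Type*} [Fintype ι] {s : Set E} (hs : Convex ℝ s)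
    {z : ι → E} {l : ι → ℝ} (hz : ∀ i, z i ∈ s) (hl : ∀ i, 0 ≤ l i) (hsum : ∑ i, l i = 1)
    {j k : ι} {t : ℝ} (hj : t ≤ l j) (hk : -t ≤ l k) :
    ∑ i, l i • z i + t • (z k - z j) ∈ s := by
  classical
  rcases eq_or_ne j k with rfl | hjk
  · simpa using hs.sum_mem (fun i _ ↦ hl i) hsum fun i _ ↦ hz i
  let m : ι → ℝ := l + Pi.single k t - Pi.single j t
  have hm : ∀ i ∈ Finset.univ, 0 ≤ m i := by
    intro i _
    have := hl i
    rcases eq_or_ne i j with rfl | hij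
    · simpa [m, hjk] using hj
    rcases eq_or_ne i k with rfl | hik
    · simp only [m, Pi.add_apply, Pi.sub_apply, Pi.single_eq_same, Pi.single_eq_of_ne hij]
      linarith
    · simpa [m, hij, hik] using this
  have hm_sum : ∑ i, m i = 1 := by simp [m, Finset.sum_add_distrib, hsum]
  convert hs.sum_mem hm hm_sum fun i _ ↦ hz i using 1
  simp [m, add_smul, sub_smul, Finset.sum_add_distrib, Pi.single_apply, ite_smul, smul_sub,
    add_sub_assoc]

end RealModule

section Convex

variable {E F : Type*} [NormedAddCommGroup E] [NormedSpace ℝ E]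
  [NormedAddCommGroup F] [NormedSpace ℝ F]

lemma half_infDist_compl_le_of_mem_segment {s : Set E} (hs : Convex ℝ s) {w D wb u : E}
    (hw : w ∈ s) (hadd : w + D ∈ s) (hsub : w - D ∈ s)
    (hwb : ‖wb - (1 / 4 : ℝ) • D‖ ≤ infDist w sᶜ / 4)
    (hu : u ∈ segment ℝ (w - wb) (w + wb)) :
    1 / 2 * infDist w sᶜ ≤ infDist u sᶜ := by
  obtain ⟨θ, hθ, rfl⟩ := exists_abs_le_one_of_mem_segment_sub_add hu
  have hcomb : (1 / 4 : ℝ) • (w + θ • D) + (3 / 4 : ℝ) • w = w + θ • (1 / 4 : ℝ) • D := by module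
  have hconcave : 1 / 4 * infDist (w + θ • D) sᶜ + 3 / 4 * infDist w sᶜ
      ≤ infDist (w + θ • (1 / 4 : ℝ) • D) sᶜ := by
    rw [← hcomb]
    exact (concaveOn_infDist_compl hs).2 (add_smul_mem_of_abs_le_one hs hadd hsub hθ) hw
      (by norm_num) (by norm_num) (by norm_num)
  have hdist : dist (w + θ • (1 / 4 : ℝ) • D) (w + θ • wb) ≤ infDist w sᶜ / 4 := by
    rw [dist_add_left, dist_comm, dist_eq_norm, ← smul_sub, norm_smul]
    exact (mul_le_of_le_one_left (norm_nonneg _) hθ).trans hwb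
  have hlip := infDist_le_infDist_add_dist (s := sᶜ) (x := w + θ • (1 / 4 : ℝ) • D)
    (y := w + θ • wb)
  have hnonneg : 0 ≤ infDist (w + θ • D) sᶜ := infDist_nonneg
  linarith

lemma exists_norm_sum_smul_sub_le {ι : Type*} [Fintype ι] [Nonempty ι] (v : ι → F) {l : ι → ℝ}
    (hl : ∀ i, 0 ≤ l i) (hsum : ∑ i, l i = 1) (k : ι) :
    ∃ j, ‖∑ i, l i • v i - v k‖ ≤ Fintype.card ι * (l j * ‖v k - v j‖) := by
  obtain ⟨j, hj⟩ := Finite.exists_max fun i ↦ l i * ‖v k - v i‖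
  refine ⟨j, ?_⟩
  calc ‖∑ i, l i • v i - v k‖ = ‖∑ i, l i • (v i - v k)‖ := by
        simp only [smul_sub, Finset.sum_sub_distrib, ← Finset.sum_smul, hsum, one_smul]
    _ ≤ ∑ i, l i * ‖v k - v i‖ := norm_sum_le_of_le _ fun i _ ↦ by
        rw [norm_smul, Real.norm_of_nonneg (hl i), norm_sub_rev]
    _ ≤ ∑ _i : ι, l j * ‖v k - v j‖ := Finset.sum_le_sum fun i _ ↦ hj i
    _ = Fintype.card ι * (l j * ‖v k - v j‖) := by simp

theorem exists_add_sub_mem_convexHull [FiniteDimensional ℝ E] (L : E →ₗ[ℝ] F) {K : Set E} {w : E}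
    (hw : w ∈ convexHull ℝ K) :
    ∃ x ∈ K, ∃ y ∈ K, ∃ t : ℝ, 0 < t ∧ w + t • (x - y) ∈ convexHull ℝ K ∧
      w - t • (x - y) ∈ convexHull ℝ K ∧
      ‖L w - L x‖ ≤ (Module.finrank ℝ E + 1) * (t * ‖L x - L y‖) := by
  obtain ⟨ι, _, z, l, hzK, hind, hl, hsum, rfl⟩ := eq_pos_convex_span_of_mem_convexHull hw
  have hz i : z i ∈ convexHull ℝ K := subset_convexHull ℝ K (hzK ⟨i, rfl⟩)
  have hl' i : 0 ≤ l i := (hl i).le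
  have hι : Nonempty ι := by
    by_contra! h
    simp at hsum
  obtain ⟨k, hk⟩ := Finite.exists_max l
  obtain ⟨j, hj⟩ := exists_norm_sum_smul_sub_le (fun i ↦ L (z i)) hl' hsum k
  have hcard : (Fintype.card ι : ℝ) ≤ Module.finrank ℝ E + 1 := by
    exact_mod_cast hind.card_le_finrank_succ.trans (Nat.succ_le_succ (Submodule.finrank_le _))
  have hmem {t : ℝ} (htj : t ≤ l j) (htk : -t ≤ l k) :=
    sum_smul_add_smul_sub_mem (convex_convexHull ℝ K) hz hl' hsum htj htk
  refine ⟨z k, hzK ⟨k, rfl⟩, z j, hzK ⟨j, rfl⟩, l j, hl j, hmem le_rfl (by linarith [hl j, hl k]),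
    ?_, ?_⟩
  · rw [sub_eq_add_neg, ← neg_smul]
    exact hmem (by linarith [hl j]) (by simpa using hk j)
  · rw [map_sum]
    simp only [map_smul]
    exact hj.trans (by have := hl' j; gcongr)

end Convex

section Sphere

lemma frequently_mem_and_notMem_of_accPt {X : Type*} [TopologicalSpace X] [T1Space X] {C s : Set X}
    {x : X} (hx : AccPt x (𝓟 C)) (hs : s.Finite) : ∃ᶠ y in 𝓝 x, y ∈ C ∧ y ∉ s :=
  ((accPt_iff_frequently_nhdsNE.1 hx).and_eventually
    (nhdsNE_le_cofinite x hs.compl_mem_cofinite)).filter_mono nhdsWithin_le_nhds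

variable {F : Type*} [NormedAddCommGroup F] [NormedSpace ℝ F]

lemma preperfect_sphere_zero (hF : 1 < Module.rank ℝ F) {ρ : ℝ} (hρ : 0 < ρ) :
    Preperfect (sphere (0 : F) ρ) := by
  intro x hx
  have hx' : -x ∈ sphere (0 : F) ρ := by simpa using hx
  exact (isPreconnected_sphere hF 0 ρ).preperfect_of_nontrivial
    ⟨x, hx, -x, hx', fun h ↦ ne_neg_of_mem_sphere ℝ hρ.ne' ⟨x, hx⟩ (Subtype.ext h)⟩ x hx

lemma exists_perturbation_mem_sphere {E : Type*} [SeminormedAddCommGroup E] {Φ : F → E} {ρ : ℝ}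
    (hF : 1 < Module.rank ℝ F) (hρ : 0 < ρ) (hΦ : Continuous Φ) {a b : F} (hb : b ∈ sphere 0 ρ)
    (hab : a ≠ b) {ε : ℝ} (hε : 0 < ε) :
    ∃ c ∈ sphere (0 : F) ρ, c ≠ a ∧ c ≠ -a ∧ ‖Φ b - Φ c‖ < ε ∧ ‖a - b‖ / 2 < ‖a - c‖ := by
  have hclose : ∀ᶠ c in 𝓝 b, ‖Φ b - Φ c‖ < ε :=
    (show Continuous fun c ↦ ‖Φ b - Φ c‖ by fun_prop).tendsto' b 0 (by simp) |>.eventually_lt_const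
      hε
  have hfar : ∀ᶠ c in 𝓝 b, ‖a - b‖ / 2 < ‖a - c‖ :=
    ((show Continuous fun c ↦ ‖a - c‖ by fun_prop).tendsto b).eventually_const_lt
      (half_lt_self (norm_sub_pos_iff.2 hab))
  obtain ⟨c, ⟨hc, hca⟩, hclose, hfar⟩ :=
    (frequently_mem_and_notMem_of_accPt (preperfect_sphere_zero hF hρ b hb)
      (toFinite {a, -a})).and_eventually (hclose.and hfar) |>.exists
  rw [mem_insert_iff, mem_singleton_iff, not_or] at hca
  exact ⟨c, hc, hca.1, hca.2, hclose, hfar⟩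

variable {E : Type*} [NormedAddCommGroup E] [NormedSpace ℝ E] {L : E →L[ℝ] F} {Φ : F → E} {ρ : ℝ}

lemma norm_le_of_mem_convexHull_image_sphere (hL : Function.LeftInverse L Φ) {w : E}
    (hw : w ∈ convexHull ℝ (Φ '' sphere 0 ρ)) : ‖L w‖ ≤ ρ := by
  have hsub : Φ '' sphere 0 ρ ⊆ L ⁻¹' closedBall 0 ρ := by
    rintro _ ⟨a, ha, rfl⟩
    simpa [hL a] using (mem_sphere_zero_iff_norm.1 ha).le
  simpa using convexHull_min hsub ((convex_closedBall 0 ρ).linear_preimage L.toLinearMap) hw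

lemma norm_lt_of_mem_interior_convexHull_image_sphere [FiniteDimensional ℝ F]
    (hL : Function.LeftInverse L Φ) (hρ : ρ ≠ 0) {w : E}
    (hw : w ∈ interior (convexHull ℝ (Φ '' sphere 0 ρ))) : ‖L w‖ < ρ := by
  have hopen : IsOpenMap L := L.toLinearMap.isOpenMap_of_finiteDimensional hL.surjective
  have hsub : convexHull ℝ (Φ '' sphere 0 ρ) ⊆ L ⁻¹' closedBall 0 ρ := fun x hx ↦ by
    simpa using norm_le_of_mem_convexHull_image_sphere hL hx
  have hmem := interior_mono hsub hw
  rw [← hopen.preimage_interior_eq_interior_preimage L.continuous, interior_closedBall 0 hρ] at hmem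
  simpa using hmem

lemma infDist_compl_convexHull_image_sphere_pos [FiniteDimensional ℝ F]
    (hL : Function.LeftInverse L Φ) (hρ : ρ ≠ 0) {w : E}
    (hw : w ∈ interior (convexHull ℝ (Φ '' sphere 0 ρ))) :
    0 < infDist w (convexHull ℝ (Φ '' sphere 0 ρ))ᶜ := by
  set S := convexHull ℝ (Φ '' sphere 0 ρ) with hS
  obtain ⟨_, a, ha, rfl⟩ := convexHull_nonempty_iff.1 ⟨w, interior_subset hw⟩
  have hne : Sᶜ.Nonempty := by
    by_contra! h
    have hlt := norm_lt_of_mem_interior_convexHull_image_sphere hL hρ (w := Φ a)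
      (by simp [← hS, compl_empty_iff.1 h])
    rw [hL a, mem_sphere_zero_iff_norm.1 ha] at hlt
    exact hlt.false
  refine (infDist_pos_iff_notMem_closure hne).1 ?_
  rw [closure_compl]
  exact not_not.2 hw

theorem exists_segment_subset_interior_convexHull_image_sphere [FiniteDimensional ℝ E]
    (hF : 1 < Module.rank ℝ F) (hΦ : Continuous Φ) (hL : Function.LeftInverse L Φ) (hρ : 0 < ρ)
    {w : E} (hw : w ∈ interior (convexHull ℝ (Φ '' sphere 0 ρ))) :
    ∃ t : ℝ, 0 < t ∧ ∃ a ∈ sphere (0 : F) ρ, ∃ b ∈ sphere (0 : F) ρ, b ≠ a ∧ b ≠ -a ∧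
      ρ - ‖L w‖ ≤ 8 * (Module.finrank ℝ E + 1) * ‖t • (a - b)‖ ∧
      ∀ u ∈ segment ℝ (w - t • (Φ a - Φ b)) (w + t • (Φ a - Φ b)),
        u ∈ interior (convexHull ℝ (Φ '' sphere 0 ρ)) ∧
        1 / 2 * infDist w (frontier (convexHull ℝ (Φ '' sphere 0 ρ))) ≤
          infDist u (frontier (convexHull ℝ (Φ '' sphere 0 ρ))) := by
  have : FiniteDimensional ℝ F := Module.Finite.of_surjective L.toLinearMap hL.surjective
  have hnorm := norm_lt_of_mem_interior_convexHull_image_sphere hL hρ.ne' hw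
  have hR := infDist_compl_convexHull_image_sphere_pos hL hρ.ne' hw
  obtain ⟨_, ⟨a, ha, rfl⟩, _, ⟨b, hb, rfl⟩, t, ht, hadd, hsub, hdist⟩ :=
    exists_add_sub_mem_convexHull L.toLinearMap (interior_subset hw)
  set S := convexHull ℝ (Φ '' sphere 0 ρ)
  simp only [ContinuousLinearMap.coe_coe, hL a, hL b] at hdist
  have hgap : ρ - ‖L w‖ ≤ (Module.finrank ℝ E + 1) * (t * ‖a - b‖) := by
    rw [← mem_sphere_zero_iff_norm.1 ha]
    exact (norm_sub_norm_le a (L w)).trans (norm_sub_rev a (L w) ▸ hdist)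
  have hab : a ≠ b := by
    rintro rfl
    simp only [sub_self, norm_zero, mul_zero] at hgap
    linarith
  obtain ⟨c, hc, hca, hca', hclose, hfar⟩ :=
    exists_perturbation_mem_sphere hF hρ hΦ hb hab (div_pos hR ht)
  have hpert : ‖(t / 4) • (Φ a - Φ c) - (1 / 4 : ℝ) • t • (Φ a - Φ b)‖ ≤ infDist w Sᶜ / 4 := by
    rw [lt_div_iff₀' ht] at hclose
    calc _ = ‖(t / 4) • (Φ b - Φ c)‖ := by congr 1; module
      _ = t * ‖Φ b - Φ c‖ / 4 := by rw [norm_smul, Real.norm_of_nonneg (by positivity)]; ring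
      _ ≤ infDist w Sᶜ / 4 := by gcongr
  refine ⟨t / 4, by positivity, a, ha, c, hc, hca, hca', ?_, fun u hu ↦ ?_⟩
  · rw [norm_smul, Real.norm_of_nonneg (by positivity)]
    calc ρ - ‖L w‖ ≤ (Module.finrank ℝ E + 1) * (t * ‖a - b‖) := hgap
      _ ≤ (Module.finrank ℝ E + 1) * (t * (2 * ‖a - c‖)) := by gcongr; linarith
      _ = _ := by ring
  · have hle := half_infDist_compl_le_of_mem_segment (convex_convexHull ℝ _) (interior_subset hw)
      hadd hsub hpert hu
    have hu' : u ∈ interior S := mem_interior_of_infDist_compl_pos (by linarith)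
    refine ⟨hu', ?_⟩
    rwa [infDist_frontier_eq_infDist_compl (interior_subset hw),
      infDist_frontier_eq_infDist_compl (interior_subset hu')]

end Sphere

section State

variable {d : ℕ}

/-- The traceless part `v ⊗ v - (|v|² / d) I_d` of `v ⊗ v`. -/
def tracelessSq (v : EuclideanSpace ℝ (Fin d)) : S0 d :=
  ⟨fun i j ↦ v i * v j - ‖v‖ ^ 2 / d * (if i = j then 1 else 0), by
    refine ⟨fun i j ↦ by simp only [mul_comm (v i), eq_comm], ?_⟩
    rcases eq_or_ne d 0 with rfl | hd
    · simp
    · simp [Finset.sum_sub_distrib, EuclideanSpace.real_norm_sq_eq, ← sq,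
        mul_div_cancel₀ _ (Nat.cast_ne_zero (R := ℝ).2 hd)]⟩

/-- The state `(v, v ⊗ v - (|v|² / d) I_d)`, which lies in `K_r` for `r = |v|²`. -/
def sphereState (v : EuclideanSpace ℝ (Fin d)) : Vec d × S0 d := (v.ofLp, tracelessSq v)

/-- The projection `(v, U) ↦ v`, with values in `EuclideanSpace` so that the norm of the velocity is
the Euclidean one, `Vec d` carrying the sup norm. -/
def velocity (d : ℕ) : Vec d × S0 d →L[ℝ] EuclideanSpace ℝ (Fin d) :=
  (EuclideanSpace.equiv (Fin d) ℝ).symm.toContinuousLinearMap ∘L ContinuousLinearMap.fst ℝ _ _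

lemma norm_velocity (w : Vec d × S0 d) : ‖velocity d w‖ = √(∑ i, w.1 i ^ 2) := by
  simp [EuclideanSpace.norm_eq, velocity]

lemma velocity_leftInverse : Function.LeftInverse (velocity d) sphereState := fun _ ↦ rfl

lemma continuous_sphereState : Continuous (sphereState (d := d)) := by
  unfold sphereState tracelessSq
  fun_prop

lemma sum_sq_eq_of_mem_Kset (hd : d ≠ 0) {r : ℝ} {w : Vec d × S0 d} (hw : w ∈ Kset d r) :
    ∑ i, w.1 i ^ 2 = r := by
  have htrace := w.2.2.2
  have hd' : (d : ℝ) ≠ 0 := by exact_mod_cast hd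
  simp only [hw _ _, ← sq, Finset.sum_sub_distrib] at htrace
  simpa [mul_div_cancel₀ _ hd', sub_eq_zero] using htrace

lemma sub_sum_sq_le (w : Vec d × S0 d) {r : ℝ} (hr : 0 ≤ r) :
    r - ∑ i, w.1 i ^ 2 ≤ 2 * √r * (√r - ‖velocity d w‖) := by
  have hw : ‖velocity d w‖ ^ 2 = ∑ i, w.1 i ^ 2 := EuclideanSpace.real_norm_sq_eq _
  linarith [sq_nonneg (√r - ‖velocity d w‖), Real.sq_sqrt hr]

lemma Kset_eq_image_sphere (hd : d ≠ 0) {r : ℝ} (hr : 0 ≤ r) :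
    Kset d r = sphereState '' sphere 0 √r := by
  ext w
  constructor
  · intro hw
    have hnorm : ‖velocity d w‖ = √r := by rw [norm_velocity, sum_sq_eq_of_mem_Kset hd hw]
    refine ⟨velocity d w, mem_sphere_zero_iff_norm.2 hnorm, Prod.ext rfl (Subtype.ext ?_)⟩
    ext i j
    change w.1 i * w.1 j - ‖velocity d w‖ ^ 2 / d * _ = _
    rw [hw i j, hnorm, Real.sq_sqrt hr]
  · rintro ⟨v, hv, rfl⟩ i j
    simp [sphereState, tracelessSq, mem_sphere_zero_iff_norm.1 hv, Real.sq_sqrt hr]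

end State

/-- **Lemma 4.1.** Let `d ≥ 2`, `r > 0`. There is `C = C(d,r) > 0` such that
for every `w = (v, U)` in the interior of `K_r^co` there is `w̄ = (v̄, Ū)` such that:
(i) `w̄ = λ((a, a⊗a) − (b, b⊗b))` with `λ > 0`, `|a|² = |b|² = r`, `b ≠ ±a`;
(ii) the segment `σ = [w − w̄, w + w̄]` lies in the interior of `K_r^co`;
(iii) `|v̄| ≥ C (r − |v|²)`;
(iv) `dist(σ, ∂K_r^co) ≥ (1/2) dist(w, ∂K_r^co)`. -/
theorem stmt6 (d : ℕ) (hd : 2 ≤ d) (r : ℝ) (hr : 0 < r) :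
    ∃ C : ℝ, 0 < C ∧
      ∀ w : Vec d × S0 d, w ∈ interior (convexHull ℝ (Kset d r)) →
        ∃ (wb : Vec d × S0 d) (lam : ℝ) (a b : Vec d),
          0 < lam ∧
          (∑ i, (a i) ^ 2 = r) ∧ (∑ i, (b i) ^ 2 = r) ∧ b ≠ a ∧ b ≠ -a ∧
          wb.1 = lam • (a - b) ∧
          (∀ i j, (wb.2 : Mat d) i j = lam * (a i * a j - b i * b j)) ∧
          segment ℝ (w - wb) (w + wb) ⊆ interior (convexHull ℝ (Kset d r)) ∧
          Real.sqrt (∑ i, (wb.1 i) ^ 2) ≥ C * (r - ∑ i, (w.1 i) ^ 2) ∧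
          (∀ u ∈ segment ℝ (w - wb) (w + wb),
            Metric.infDist u (frontier (convexHull ℝ (Kset d r)))
              ≥ (1 / 2) * Metric.infDist w (frontier (convexHull ℝ (Kset d r)))) := by
  have hd0 : d ≠ 0 := by omega
  have hρ : 0 < √r := Real.sqrt_pos.2 hr
  have hrank : 1 < Module.rank ℝ (EuclideanSpace ℝ (Fin d)) := by
    rw [← Module.finrank_eq_rank, finrank_euclideanSpace_fin]
    exact_mod_cast hd
  rw [Kset_eq_image_sphere hd0 hr.le]
  have hsq {v : EuclideanSpace ℝ (Fin d)} (hv : v ∈ sphere 0 √r) : ∑ i, v i ^ 2 = r := by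
    rw [← EuclideanSpace.real_norm_sq_eq, mem_sphere_zero_iff_norm.1 hv, Real.sq_sqrt hr.le]
  refine ⟨1 / (16 * √r * (Module.finrank ℝ (Vec d × S0 d) + 1)), by positivity, fun w hw ↦ ?_⟩
  obtain ⟨t, ht, a, ha, b, hb, hba, hba', hgap, hseg⟩ :=
    exists_segment_subset_interior_convexHull_image_sphere hrank continuous_sphereState
      velocity_leftInverse hρ hw
  refine ⟨t • (sphereState a - sphereState b), t, a, b, ht, hsq ha, hsq hb, ?_, ?_, rfl, ?_,
    fun u hu ↦ (hseg u hu).1, ?_, fun u hu ↦ (hseg u hu).2⟩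
  · exact fun h ↦ hba (WithLp.ofLp_injective 2 h)
  · exact fun h ↦ hba' (WithLp.ofLp_injective 2 h)
  · intro i j
    simp [sphereState, tracelessSq, mem_sphere_zero_iff_norm.1 ha, mem_sphere_zero_iff_norm.1 hb]
  · rw [ge_iff_le, one_div_mul_eq_div, div_le_iff₀ (by positivity), ← norm_velocity]
    change _ ≤ ‖t • (a - b)‖ * _
    calc r - ∑ i, w.1 i ^ 2 ≤ 2 * √r * (√r - ‖velocity d w‖) := sub_sum_sq_le w hr.le
      _ ≤ 2 * √r * (8 * (Module.finrank ℝ (Vec d × S0 d) + 1) * ‖t • (a - b)‖) := by gcongr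
      _ = _ := by ring
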